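/- Assume the pairs (𝓡₁, 𝓡₂) and (𝓡₁*, 𝓡₂*) are incommensurate, let r > 1, and for k = 1,2 and α_k ∈ 𝓐_k assume u_k(·, α_k) ∈ L^∞(ℝ²; ℝ³) is 𝓡_𝓜-periodic and v_{(α₁,α₂)} ∈ L^∞_{2r}(ℝ² × [−L_u^z, L_u^z]) is even. Then for each j ∈ {1,2} and Lebesgue-almost every (γ₁, γ₂) ∈ Γ₁ × Γ₂, the truncated interlayer energy densities e^{(inter)}_{j,N,γ}(u) := (|Γ_j|(2N+1)²)^{−1} Σ_{R_j ∈ 𝓡_j(N)} Σ_{α_j ∈ 𝓐_j} (1/2) Σ_{R_{3−j} ∈ 𝓡_{3−j}, α_{3−j} ∈ 𝓐_{3−j}} v_{(α₁,α₂)}(Y_j(R_j + γ_j, α_j) − Y_{3−j}(R_{3−j} + γ_{3−j}, α_{3−j})) converge, as N → ∞, to e^{(inter)}_{j,γ}(u) := (2|Γ_𝓜|)^{−1} Σ_{α₁,α₂} ∫_{ℝ²} v_{(α₁,α₂)}(A₁ξ + γ₁ + τ₁^{(α₁)} + u₁(A₁ξ + γ₁, α₁) − A₂ξ − γ₂ −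 τ₂^{(α₂)} − u₂(A₂ξ + γ₂, α₂)) dξ. -/

import Mathlib

open scoped Real BigOperators
open MeasureTheory Filter Topology Matrix

noncomputable section

/-- The 2×2 rotation matrix through angle `φ`. -/
def Rot (φ : ℝ) : Matrix (Fin 2) (Fin 2) ℝ :=
  !![Real.cos φ, -Real.sin φ; Real.sin φ, Real.cos φ]

/-- Euclidean norm on `ℝ²`. -/
def norm2 (v : Fin 2 → ℝ) : ℝ := Real.sqrt (v 0 ^ 2 + v 1 ^ 2)

/-- Euclidean norm on `ℝ³`. -/
def norm3 (v : Fin 3 → ℝ) : ℝ := Real.sqrt (v 0 ^ 2 + v 1 ^ 2 + v 2 ^ 2)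

/-- Cast an integer vector to a real vector. -/
def iv (n : Fin 2 → ℤ) : Fin 2 → ℝ := fun i => (n i : ℝ)

/-- The lattice `M ℤ²`. -/
def lat (M : Matrix (Fin 2) (Fin 2) ℝ) : Set (Fin 2 → ℝ) :=
  {v | ∃ n : Fin 2 → ℤ, v = M.mulVec (iv n)}

/-- The unit cell `M [0,1)²`. -/
def cell (M : Matrix (Fin 2) (Fin 2) ℝ) : Set (Fin 2 → ℝ) :=
  {v | ∃ t : Fin 2 → ℝ, (∀ i, t i ∈ Set.Ico (0 : ℝ) 1) ∧ v = M.mulVec t}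

/-- The reciprocal matrix `2π M⁻ᵀ`. -/
def recip (M : Matrix (Fin 2) (Fin 2) ℝ) : Matrix (Fin 2) (Fin 2) ℝ :=
  (2 * π) • (M⁻¹)ᵀ

/-- A pair of lattices with reciprocal-lattice matrices `B1`, `B2` is incommensurate iff
`G₁ + G₂ = 0` with `G_k` in the respective reciprocal lattice implies `G₁ = G₂ = 0`. -/
def Incommensurate (B1 B2 : Matrix (Fin 2) (Fin 2) ℝ) : Prop :=
  ∀ G1 ∈ lat B1, ∀ G2 ∈ lat B2, G1 + G2 = 0 → G1 = 0 ∧ G2 = 0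

/-- Euclidean distance from `v ∈ ℝ²` to the integer lattice `ℤ²`. -/
def distZ2 (v : Fin 2 → ℝ) : ℝ := ⨅ m : Fin 2 → ℤ, norm2 (v - iv m)

/-- `θ` is a `(q,K,σ)`-Diophantine 2D rotation. -/
def IsDiophantine (A : Matrix (Fin 2) (Fin 2) ℝ) (q K σ θ : ℝ) : Prop :=
  ∀ n : Fin 2 → ℤ, n ≠ 0 →
    K / norm2 (iv n) ^ (2 * σ) ≤ distZ2 ((q • (Aᵀ * Rot θ * (A⁻¹)ᵀ)).mulVec (iv n)) ∧
    K / norm2 (iv n) ^ (2 * σ) ≤ distZ2 ((q⁻¹ • (Aᵀ * Rot (-θ) * (A⁻¹)ᵀ)).mulVec (iv n))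

/-- The moiré length scale ratio `ρ_𝓜`. -/
def rhoM (q θ : ℝ) : ℝ :=
  (Real.sqrt ((Real.sqrt q - (Real.sqrt q)⁻¹) ^ 2 + 4 * Real.sin (θ / 2) ^ 2))⁻¹

/-- Riemann zeta function (for real `s > 1`, via its Dirichlet series). -/
def zetaR (s : ℝ) : ℝ := ∑' n : ℕ, ((n : ℝ) + 1) ^ (-s)

/-- Operator (spectral) norm of a 2×2 real matrix w.r.t. the Euclidean norm. -/
def opNorm2 (M : Matrix (Fin 2) (Fin 2) ℝ) : ℝ :=
  ⨆ x : {x : Fin 2 → ℝ // norm2 x ≤ 1}, norm2 (M.mulVec x.1)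

/-- Embedding `ℝ² ↪ ℝ³`, `x ↦ (x, 0)`. -/
def emb (x : Fin 2 → ℝ) : Fin 3 → ℝ := ![x 0, x 1, 0]

/-- Japanese bracket `⟨x⟩ = (1 + |x|²)^{1/2}` on `ℝ³`. -/
def jap3 (x : Fin 3 → ℝ) : ℝ := Real.sqrt (1 + norm3 x ^ 2)

/-- The region `ℝ² × [−L, L] ⊆ ℝ³`. -/
def slab (L : ℝ) : Set (Fin 3 → ℝ) := {x | x 2 ∈ Set.Icc (-L) L}

/-- Euclidean inner product on `ℝ²`. -/
def dot2 (a b : Fin 2 → ℝ) : ℝ := ∑ i, a i * b i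

/-- The index box `⟦−N, N⟧²`. -/
def box (N : ℕ) : Finset (Fin 2 → ℤ) :=
  Finset.Icc (fun _ => -(N : ℤ)) (fun _ => (N : ℤ))

/-- The normalized Dirichlet kernel `Δ_N^j` of the lattice `A_j ℤ²`. -/
def Dir (Aj : Matrix (Fin 2) (Fin 2) ℝ) (N : ℕ) (G : Fin 2 → ℝ) : ℂ :=
  (((2 * N + 1 : ℝ)) ^ 2)⁻¹ •
    ∑ n ∈ box N, Complex.exp (Complex.I * (dot2 G (Aj.mulVec (iv n)) : ℝ))


/-! ### Maximal inequality -/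

open scoped ENNReal

lemma mem_box_iff {N : ℕ} {m : Fin 2 → ℤ} : m ∈ box N ↔ ∀ i, |m i| ≤ (N : ℤ) := by
  simp only [box, Finset.mem_Icc, Pi.le_def, abs_le]
  exact ⟨fun h i => ⟨h.1 i, h.2 i⟩, fun h => ⟨fun i => (h i).1, fun i => (h i).2⟩⟩

lemma box_eq_pi (N : ℕ) :
    box N = Fintype.piFinset (fun _ : Fin 2 => Finset.Icc (-(N : ℤ)) (N : ℤ)) := by
  ext m
  simp [mem_box_iff, Fintype.mem_piFinset, abs_le]

lemma card_box (N : ℕ) : (box N).card = (2 * N + 1) ^ 2 := by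
  rw [box_eq_pi, Fintype.card_piFinset]
  simp only [Int.card_Icc, Finset.prod_const, Finset.card_univ, Fintype.card_fin]
  congr 1
  omega

lemma mem_closedBall_box {n m : Fin 2 → ℤ} {N : ℕ} :
    m ∈ Metric.closedBall n (N : ℝ) ↔ m - n ∈ box N := by
  rw [Metric.mem_closedBall, dist_pi_le_iff (by positivity), mem_box_iff]
  refine forall_congr' fun i => ?_
  rw [Int.dist_eq]
  simp only [Pi.sub_apply]
  norm_cast

lemma cover_bound (L K : ℕ) (f : (Fin 2 → ℤ) → ℝ≥0∞) (lam : ℝ≥0∞)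
    (S : Finset (Fin 2 → ℤ)) (hS : S ⊆ box L)
    (h : ∀ n ∈ S, ∃ N ≤ K, lam * ((2 * N + 1) ^ 2 : ℕ) ≤ ∑ m ∈ box N, f (m + n)) :
    lam * S.card ≤ 25 * ∑ m ∈ box (L + K), f m := by
  classical
  choose! ρ hρK hρ using h
  obtain ⟨u, huS, hdisj, hcov⟩ :=
    Vitali.exists_disjoint_subfamily_covering_enlargement_closedBall (α := Fin 2 → ℤ)
      (S : Set (Fin 2 → ℤ)) (fun n => n) (fun n => (ρ n : ℝ)) K
      (fun a ha => by exact_mod_cast hρK a ha) 5 (by norm_num)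
  have hufin : u.Finite := S.finite_toSet.subset huS
  lift u to Finset (Fin 2 → ℤ) using hufin
  have huS' : u ⊆ S := by exact_mod_cast huS
  -- S is covered by enlarged boxes
  have hsub : S ⊆ u.biUnion fun b => (box (5 * ρ b)).map (addRightEmbedding b) := by
    intro a ha
    obtain ⟨b, hb, hab⟩ := hcov a ha
    have : a ∈ Metric.closedBall b (((5 * ρ b : ℕ)) : ℝ) := by
      have := hab (Metric.mem_closedBall_self (by positivity))
      simpa using this
    rw [mem_closedBall_box] at this
    rw [Finset.mem_biUnion]
    refine ⟨b, hb, ?_⟩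
    rw [Finset.mem_map]
    exact ⟨a - b, this, by simp⟩
  have hcard : S.card ≤ ∑ b ∈ u, 25 * (2 * ρ b + 1) ^ 2 := by
    refine (Finset.card_le_card hsub).trans (Finset.card_biUnion_le.trans ?_)
    refine Finset.sum_le_sum fun b _ => ?_
    rw [Finset.card_map, card_box]
    nlinarith [ρ b |>.zero_le]
  have hdis2 : (u : Set (Fin 2 → ℤ)).PairwiseDisjoint
      fun b => (box (ρ b)).map (addRightEmbedding b) := by
    intro a ha b hb hab
    have h1 := hdisj ha hb hab
    rw [Function.onFun, Finset.disjoint_left]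
    intro x hx hy
    rw [Function.onFun, Set.disjoint_left] at h1
    rw [Finset.mem_map] at hx hy
    obtain ⟨x1, hx1, rfl⟩ := hx
    obtain ⟨y1, hy1, hy2⟩ := hy
    refine h1 (a := x1 + a) ?_ ?_
    · rw [mem_closedBall_box]; simpa using hx1
    · rw [mem_closedBall_box]
      have : x1 + a = y1 + b := by simpa using hy2.symm
      rw [this]; simpa using hy1
  calc lam * S.card ≤ lam * ((∑ b ∈ u, 25 * (2 * ρ b + 1) ^ 2 : ℕ) : ℝ≥0∞) := by
        gcongr
    _ = 25 * ∑ b ∈ u, lam * (((2 * ρ b + 1) ^ 2 : ℕ) : ℝ≥0∞) := by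
        rw [Nat.cast_sum, Finset.mul_sum, Finset.mul_sum]
        refine Finset.sum_congr rfl fun b _ => ?_
        push_cast
        ring
    _ ≤ 25 * ∑ b ∈ u, ∑ m ∈ box (ρ b), f (m + b) := by
        gcongr with b hb
        exact hρ b (huS' hb)
    _ = 25 * ∑ m ∈ u.biUnion (fun b => (box (ρ b)).map (addRightEmbedding b)), f m := by
        rw [Finset.sum_biUnion hdis2]
        simp
    _ ≤ 25 * ∑ m ∈ box (L + K), f m := by
        gcongr
        intro x hx
        rw [Finset.mem_biUnion] at hx
        obtain ⟨b, hb, hx⟩ := hx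
        rw [Finset.mem_map] at hx
        obtain ⟨y, hy, rfl⟩ := hx
        have h2 := mem_box_iff.1 (hS (huS' hb))
        have h1 := mem_box_iff.1 hy
        have h3 := hρK b (huS' hb)
        rw [mem_box_iff]
        intro i
        have := abs_add_le (y i) (b i)
        have e1 := h1 i
        have e2 := h2 i
        simp only [addRightEmbedding_apply, Pi.add_apply]
        push_cast
        have : (ρ b : ℤ) ≤ K := by exact_mod_cast h3
        linarith

/-- Weak type (1,1) maximal inequality for translations on a group, truncated. -/
lemma maximal_trunc {X : Type*} [AddCommGroup X] [MeasurableSpace X] [MeasurableAdd X]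
    (μ : Measure X) [μ.IsAddLeftInvariant] [IsProbabilityMeasure μ]
    (a : (Fin 2 → ℤ) →+ X) (f : X → ℝ≥0∞) (hf : Measurable f) (lam : ℝ≥0∞) (K : ℕ) :
    lam * μ {x | ∃ N ≤ K, lam * ((2 * N + 1) ^ 2 : ℕ) ≤ ∑ m ∈ box N, f (a m + x)}
      ≤ 25 * ∫⁻ x, f x ∂μ := by
  classical
  set E := {x | ∃ N ≤ K, lam * ((2 * N + 1) ^ 2 : ℕ) ≤ ∑ m ∈ box N, f (a m + x)} with hE
  have hmeas : ∀ m, Measurable fun x => f (a m + x) := fun m =>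
    hf.comp (measurable_const_add _)
  have hEm : MeasurableSet E := by
    have : E = ⋃ N ∈ Finset.range (K + 1),
        {x | lam * ((2 * N + 1) ^ 2 : ℕ) ≤ ∑ m ∈ box N, f (a m + x)} := by
      ext x; simp [hE]
    rw [this]
    refine Finset.measurableSet_biUnion _ fun N _ => ?_
    exact measurableSet_le measurable_const (Finset.measurable_sum _ fun m _ => hmeas m)
  -- key inequality for every L
  have key : ∀ L : ℕ, (lam * μ E) * ((2 * L + 1) ^ 2 : ℕ) ≤
      (25 * ∫⁻ x, f x ∂μ) * ((2 * (L + K) + 1) ^ 2 : ℕ) := by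
    intro L
    have hpt : ∀ x, lam * ∑ n ∈ box L, E.indicator (1 : X → ℝ≥0∞) (a n + x) ≤
        25 * ∑ m ∈ box (L + K), f (a m + x) := by
      intro x
      have := cover_bound L K (fun m => f (a m + x)) lam
        ((box L).filter fun n => a n + x ∈ E) (Finset.filter_subset _ _) (by
          intro n hn
          obtain ⟨N, hN, h⟩ := (Finset.mem_filter.1 hn).2
          refine ⟨N, hN, ?_⟩
          simpa [map_add, add_assoc] using h)
      refine le_trans (le_of_eq ?_) this
      have : ∀ n, E.indicator (1 : X → ℝ≥0∞) (a n + x) = if a n + x ∈ E then 1 else 0 :=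
        fun n => by rw [Set.indicator_apply]; rfl
      simp only [this, Finset.card_filter, Nat.cast_sum]
      congr 1
      refine Finset.sum_congr rfl fun n _ => ?_
      by_cases hn : a n + x ∈ E <;> simp [hn]
    have hinteg := lintegral_mono (μ := μ) hpt
    have hmE : ∀ n, Measurable fun x => E.indicator (1 : X → ℝ≥0∞) (a n + x) := fun n =>
      (measurable_one.indicator hEm).comp (measurable_const_add _)
    rw [lintegral_const_mul _ (Finset.measurable_sum _ fun n _ => hmE n),
      lintegral_const_mul _ (Finset.measurable_sum _ fun n _ => hmeas n),
      lintegral_finsetSum _ (fun n _ => hmE n),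
      lintegral_finsetSum _ (fun n _ => hmeas n)] at hinteg
    have e1 : ∀ n, ∫⁻ x, E.indicator (1 : X → ℝ≥0∞) (a n + x) ∂μ = μ E := by
      intro n
      rw [lintegral_add_left_eq_self (fun x => E.indicator (1 : X → ℝ≥0∞) x)]
      exact lintegral_indicator_one hEm
    have e2 : ∀ n, ∫⁻ x, f (a n + x) ∂μ = ∫⁻ x, f x ∂μ := by
      intro n
      rw [lintegral_add_left_eq_self (fun x => f x)]
    simp only [e1, e2, Finset.sum_const, card_box, nsmul_eq_mul] at hinteg
    calc _ = lam * ((((2 * L + 1) ^ 2 : ℕ) : ℝ≥0∞) * μ E) := by ring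
      _ ≤ _ := hinteg
      _ = _ := by ring
  by_cases htop : ∫⁻ x, f x ∂μ = ⊤
  · rw [htop]; simp
  have hne : 25 * ∫⁻ x, f x ∂μ ≠ ⊤ := ENNReal.mul_ne_top (by simp) htop
  have key2 : ∀ L : ℕ, lam * μ E ≤ (25 * ∫⁻ x, f x ∂μ) *
      ENNReal.ofReal (((2 * (L + K) + 1) ^ 2 / (2 * L + 1) ^ 2 : ℝ)) := by
    intro L
    have hpos : (0:ℝ) < (2 * L + 1) ^ 2 := by positivity
    rw [ENNReal.ofReal_div_of_pos hpos, ← mul_div_assoc, ENNReal.le_div_iff_mul_le]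
    · have := key L
      convert this using 2
      · rw [← ENNReal.ofReal_natCast]; push_cast; rfl
      · rw [← ENNReal.ofReal_natCast]; push_cast; rfl
    · left; exact (ENNReal.ofReal_pos.2 hpos).ne'
    · left; simp
  have hlim : Tendsto (fun L : ℕ => ((2 * (L + K) + 1) ^ 2 / (2 * L + 1) ^ 2 : ℝ)) atTop (𝓝 1) := by
    have h1 : Tendsto (fun L : ℕ => 1 + (2 * K : ℝ) / (2 * L + 1)) atTop (𝓝 (1 + 0)) := by
      refine tendsto_const_nhds.add (tendsto_const_nhds.div_atTop ?_)
      exact tendsto_atTop_add_const_right _ _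
        (tendsto_natCast_atTop_atTop.const_mul_atTop (by norm_num))
    have h2 := h1.pow 2
    simp only [add_zero, one_pow] at h2
    refine h2.congr fun L => ?_
    have : (2 * L + 1 : ℝ) ≠ 0 := by positivity
    field_simp
    ring
  have hlim2 : Tendsto (fun L : ℕ => (25 * ∫⁻ x, f x ∂μ) *
      ENNReal.ofReal (((2 * (L + K) + 1) ^ 2 / (2 * L + 1) ^ 2 : ℝ))) atTop
      (𝓝 ((25 * ∫⁻ x, f x ∂μ) * ENNReal.ofReal 1)) :=
    ENNReal.Tendsto.const_mul (ENNReal.tendsto_ofReal hlim) (Or.inr hne)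
  have := ge_of_tendsto' hlim2 key2
  simpa using this

lemma box_maximal_ineq {X : Type*} [AddCommGroup X] [MeasurableSpace X] [MeasurableAdd X]
    (μ : Measure X) [μ.IsAddLeftInvariant] [IsProbabilityMeasure μ]
    (a : (Fin 2 → ℤ) →+ X) (f : X → ℝ≥0∞) (hf : Measurable f) (lam : ℝ≥0∞) :
    lam * μ {x | ∃ N : ℕ, lam * ((2 * N + 1) ^ 2 : ℕ) ≤ ∑ m ∈ box N, f (a m + x)}
      ≤ 25 * ∫⁻ x, f x ∂μ := by
  have hU : {x | ∃ N : ℕ, lam * ((2 * N + 1) ^ 2 : ℕ) ≤ ∑ m ∈ box N, f (a m + x)} =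
      ⋃ K : ℕ, {x | ∃ N ≤ K, lam * ((2 * N + 1) ^ 2 : ℕ) ≤ ∑ m ∈ box N, f (a m + x)} := by
    ext x
    simp only [Set.mem_ofPred_eq, Set.mem_iUnion]
    exact ⟨fun ⟨N, h⟩ => ⟨N, N, le_rfl, h⟩, fun ⟨_, N, _, h⟩ => ⟨N, h⟩⟩
  have hmono : Monotone fun K : ℕ =>
      {x | ∃ N ≤ K, lam * ((2 * N + 1) ^ 2 : ℕ) ≤ ∑ m ∈ box N, f (a m + x)} := by
    rintro K K' hK x ⟨N, hN, h⟩
    exact ⟨N, hN.trans hK, h⟩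
  rw [hU, hmono.measure_iUnion, ENNReal.mul_iSup]
  exact iSup_le fun K => maximal_trunc μ a f hf lam K

/-! ### Equidistribution on the torus -/

lemma geom_Icc_bound (z : ℂ) (hz : ‖z‖ = 1) (hz1 : z ≠ 1) (N : ℕ) :
    ‖∑ j ∈ Finset.Icc (-(N : ℤ)) (N : ℤ), z ^ j‖ ≤ 2 / ‖z - 1‖ := by
  have hz0 : z ≠ 0 := by intro h; simp [h] at hz
  have tele : ∀ N : ℕ, (∑ j ∈ Finset.Icc (-(N : ℤ)) (N : ℤ), z ^ j) * (z - 1) =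
      z ^ ((N : ℤ) + 1) - z ^ (-(N : ℤ)) := by
    intro N
    induction N with
    | zero => simp
    | succ N ih =>
      have hI : Finset.Icc (-((N + 1 : ℕ) : ℤ)) ((N + 1 : ℕ) : ℤ) =
          insert ((N : ℤ) + 1) (insert (-((N : ℤ) + 1)) (Finset.Icc (-(N : ℤ)) (N : ℤ))) := by
        ext j
        simp only [Finset.mem_Icc, Finset.mem_insert]
        push_cast
        omega
      rw [hI, Finset.sum_insert, Finset.sum_insert, add_mul, add_mul, ih]
      · push_cast
        have e1 : z ^ (-(N : ℤ)) = z ^ (-((N : ℤ) + 1)) * z := by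
          rw [← zpow_add_one₀ hz0]; congr 1; ring
        rw [e1, zpow_add_one₀ hz0 ((N : ℤ) + 1)]
        ring
      · simp
      · simp only [Finset.mem_Icc, Finset.mem_insert]
        omega
  have hpos : 0 < ‖z - 1‖ := norm_pos_iff.2 (sub_ne_zero.2 hz1)
  rw [le_div_iff₀ hpos, ← norm_mul, tele]
  refine (norm_sub_le _ _).trans ?_
  simp [norm_zpow, hz]
  norm_num

abbrev T2 := UnitAddTorus (Fin 2)

instance instProbCircle : IsProbabilityMeasure (volume : Measure UnitAddCircle) :=
  ⟨UnitAddCircle.measure_univ⟩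

instance instProbT2 : IsProbabilityMeasure (volume : Measure T2) :=
  inferInstanceAs (IsProbabilityMeasure (Measure.pi fun _ : Fin 2 =>
    (volume : Measure UnitAddCircle)))

lemma mFourier_add_arg (k : Fin 2 → ℤ) (x y : T2) :
    UnitAddTorus.mFourier k (x + y) = UnitAddTorus.mFourier k x * UnitAddTorus.mFourier k y := by
  simp only [UnitAddTorus.mFourier, ContinuousMap.coe_mk, ← Finset.prod_mul_distrib]
  refine Finset.prod_congr rfl fun i _ => ?_
  simp [fourier_apply, smul_add, AddCircle.toCircle_add]

lemma mFourier_zero_arg (k : Fin 2 → ℤ) :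
    UnitAddTorus.mFourier k (0 : T2) = 1 := by
  simp [UnitAddTorus.mFourier]

lemma mFourier_norm_arg (k : Fin 2 → ℤ) (x : T2) : ‖UnitAddTorus.mFourier k x‖ = 1 := by
  simp [UnitAddTorus.mFourier, fourier_apply, Circle.norm_coe]

def torusChar (k : Fin 2 → ℤ) : AddChar T2 ℂ where
  toFun x := UnitAddTorus.mFourier k x
  map_zero_eq_one' := mFourier_zero_arg k
  map_add_eq_mul' := mFourier_add_arg k

lemma char_sum_bound (a : (Fin 2 → ℤ) →+ T2) (k : Fin 2 → ℤ)
    (hk : ∃ n, UnitAddTorus.mFourier k (a n) ≠ 1) :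
    ∃ C : ℝ, ∀ N : ℕ, ‖∑ m ∈ box N, UnitAddTorus.mFourier k (a m)‖ ≤ C * (2 * N + 1) := by
  set z : Fin 2 → ℂ := fun i => UnitAddTorus.mFourier k (a (Pi.single i 1)) with hz
  have hzn : ∀ i, ‖z i‖ = 1 := fun i => mFourier_norm_arg k _
  have hχ : ∀ n : Fin 2 → ℤ, UnitAddTorus.mFourier k (a n) = ∏ i, z i ^ n i := by
    intro n
    have hn : n = ∑ i, n i • (Pi.single i 1 : Fin 2 → ℤ) := by
      ext j; fin_cases j <;> simp
    have h1 : a n = n 0 • a (Pi.single 0 1) + n 1 • a (Pi.single 1 1) := by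
      conv_lhs => rw [hn]
      rw [Fin.sum_univ_two, map_add, map_zsmul, map_zsmul]
    have h2 : ∀ (j : ℤ) (x : T2), UnitAddTorus.mFourier k (j • x) =
        UnitAddTorus.mFourier k x ^ j := fun j x => AddChar.map_zsmul_eq_zpow (torusChar k) j x
    rw [h1, mFourier_add_arg, h2, h2, Fin.prod_univ_two]
  have hex : ∃ i, z i ≠ 1 := by
    by_contra! hcon
    obtain ⟨n, hn⟩ := hk
    exact hn (by rw [hχ]; simp [hcon])
  have hsum : ∀ N : ℕ, ∑ m ∈ box N, UnitAddTorus.mFourier k (a m) =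
      ∏ i, ∑ j ∈ Finset.Icc (-(N : ℤ)) (N : ℤ), z i ^ j := by
    intro N
    rw [box_eq_pi, Finset.prod_univ_sum]
    exact Finset.sum_congr rfl fun m _ => hχ m
  have htriv : ∀ (N : ℕ) i, ‖∑ j ∈ Finset.Icc (-(N : ℤ)) (N : ℤ), z i ^ j‖ ≤ 2 * N + 1 := by
    intro N i
    refine (norm_sum_le _ _).trans ?_
    simp only [norm_zpow, hzn, _root_.one_zpow, Finset.sum_const, Int.card_Icc, nsmul_eq_mul, mul_one]
    have : ((N : ℤ) + 1 - -(N : ℤ)).toNat = 2 * N + 1 := by omega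
    rw [this]; push_cast; rfl
  obtain ⟨i, hi⟩ := hex
  refine ⟨2 / ‖z i - 1‖, fun N => ?_⟩
  rw [hsum, norm_prod, Fin.prod_univ_two]
  have hg := geom_Icc_bound (z i) (hzn i) hi N
  fin_cases i
  · exact mul_le_mul hg (htriv N 1) (norm_nonneg _) (by positivity)
  · rw [mul_comm]
    exact mul_le_mul hg (htriv N 0) (norm_nonneg _) (by positivity)

def avg (a : (Fin 2 → ℤ) →+ T2) (f : T2 → ℂ) (N : ℕ) (x : T2) : ℂ :=
  ((2 * N + 1 : ℂ) ^ 2)⁻¹ * ∑ m ∈ box N, f (a m + x)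

lemma norm_avg_le (a : (Fin 2 → ℤ) →+ T2) (f : T2 → ℂ) (C : ℝ) (hC : ∀ x, ‖f x‖ ≤ C)
    (N : ℕ) (x : T2) : ‖avg a f N x‖ ≤ C := by
  have hpos : (0:ℝ) < (2 * N + 1) ^ 2 := by positivity
  have hn : ‖((2 * N + 1 : ℂ) ^ 2)⁻¹‖ = ((2 * N + 1 : ℝ) ^ 2)⁻¹ := by
    rw [norm_inv, norm_pow]
    congr 2
    exact_mod_cast Complex.norm_natCast (2 * N + 1)
  rw [avg, norm_mul, hn, inv_mul_le_iff₀ hpos]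
  refine (norm_sum_le _ _).trans ((Finset.sum_le_sum fun m _ => hC _).trans ?_)
  rw [Finset.sum_const, card_box, nsmul_eq_mul]
  push_cast
  rfl

lemma weyl_continuous (a : (Fin 2 → ℤ) →+ T2)
    (ha : ∀ k : Fin 2 → ℤ, k ≠ 0 → ∃ n, UnitAddTorus.mFourier k (a n) ≠ 1)
    (f : C(T2, ℂ)) (x : T2) :
    Tendsto (fun N => avg a f N x) atTop (𝓝 (∫ t, f t)) := by
  have hinteg : ∀ f : C(T2, ℂ), Integrable (fun t => f t) (volume : Measure T2) := fun f =>
    f.continuous.integrable_of_hasCompactSupport (HasCompactSupport.of_compactSpace _)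
  have hntend : Tendsto (fun N : ℕ => (2 * N + 1 : ℝ)) atTop atTop :=
    tendsto_atTop_add_const_right _ _
      (tendsto_natCast_atTop_atTop.const_mul_atTop (by norm_num))
  let S : Submodule ℂ C(T2, ℂ) :=
    { carrier := {f | Tendsto (fun N => avg a f N x) atTop (𝓝 (∫ t, f t))}
      add_mem' := by
        intro f g hf hg
        have := Tendsto.add hf hg
        rw [← integral_add (hinteg f) (hinteg g)] at this
        refine this.congr fun N => ?_
        simp [avg, Finset.sum_add_distrib, mul_add]
      zero_mem' := by
        simp [avg]
      smul_mem' := by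
        intro c f hf
        have := Tendsto.const_mul c hf
        rw [← integral_const_mul] at this
        refine this.congr fun N => ?_
        simp only [avg, ContinuousMap.smul_apply, smul_eq_mul, ← Finset.mul_sum]
        ring }
  have hclosed : IsClosed (S : Set C(T2, ℂ)) := by
    rw [← isSeqClosed_iff_isClosed]
    intro F f hF hlim
    change Tendsto (fun N => avg a f N x) atTop (𝓝 (∫ t, f t))
    rw [Metric.tendsto_atTop]
    intro ε hε
    obtain ⟨j, hj⟩ := ((Metric.tendsto_atTop.1 hlim) (ε / 3) (by positivity))
    have hj := hj j le_rfl
    have hFj : Tendsto (fun N => avg a (F j) N x) atTop (𝓝 (∫ t, F j t)) := hF j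
    obtain ⟨N0, hN0⟩ := (Metric.tendsto_atTop.1 hFj) (ε / 3) (by positivity)
    refine ⟨N0, fun N hN => ?_⟩
    have h1 := hN0 N hN
    have hb : ∀ t, ‖f t - F j t‖ ≤ dist (F j) f := by
      intro t
      rw [← dist_eq_norm, dist_comm]
      exact ContinuousMap.dist_apply_le_dist t
    have h2 : dist (avg a f N x) (avg a (F j) N x) ≤ dist (F j) f := by
      rw [dist_eq_norm]
      have := norm_avg_le a (fun t => f t - F j t) _ hb N x
      have e : avg a f N x - avg a (F j) N x = avg a (fun t => f t - F j t) N x := by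
        simp [avg, Finset.sum_sub_distrib, mul_sub]
      rw [e]
      exact this
    have h3 : dist (∫ t, F j t) (∫ t, f t) ≤ dist (F j) f := by
      rw [dist_comm, dist_eq_norm, ← integral_sub (hinteg f) (hinteg (F j))]
      refine (norm_integral_le_of_norm_le_const (Eventually.of_forall hb)).trans ?_
      simp
    calc dist (avg a f N x) (∫ t, f t) ≤ dist (avg a f N x) (avg a (F j) N x) +
          dist (avg a (F j) N x) (∫ t, F j t) + dist (∫ t, F j t) (∫ t, f t) :=
          dist_triangle4 _ _ _ _
      _ < ε := by linarith
  have hspan : Submodule.span ℂ (Set.range (UnitAddTorus.mFourier (d := Fin 2))) ≤ S := by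
    rw [Submodule.span_le]
    rintro _ ⟨k, rfl⟩
    change Tendsto (fun N => avg a (UnitAddTorus.mFourier k) N x) atTop
      (𝓝 (∫ t, UnitAddTorus.mFourier k t))
    by_cases hk : k = 0
    · subst hk
      simp only [UnitAddTorus.mFourier_zero]
      refine tendsto_const_nhds.congr fun N => ?_
      have : ((2 * N + 1 : ℂ) ^ 2) ≠ 0 := by
        have : (2 * N + 1 : ℂ) ≠ 0 := by exact_mod_cast (Nat.succ_ne_zero (2 * N))
        positivity
      simp only [avg, ContinuousMap.one_apply, Finset.sum_const, card_box, nsmul_eq_mul, mul_one]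
      push_cast
      rw [inv_mul_cancel₀ this]
      simp
    · have hI : ∫ t, UnitAddTorus.mFourier k t = 0 := by
        obtain ⟨n, hn⟩ := ha k hk
        have h := integral_add_left_eq_self (μ := (volume : Measure T2))
          (fun t => UnitAddTorus.mFourier k t) (a n)
        simp only [mFourier_add_arg] at h
        rw [integral_const_mul] at h
        have : (UnitAddTorus.mFourier k (a n) - 1) * ∫ t, UnitAddTorus.mFourier k t = 0 := by
          rw [sub_mul, h]; simp
        rcases mul_eq_zero.1 this with h | h
        · exact absurd (sub_eq_zero.1 h) hn
        · exact h
      rw [hI]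
      obtain ⟨C, hC⟩ := char_sum_bound a k (ha k hk)
      have hlim : Tendsto (fun N : ℕ => C / (2 * N + 1 : ℝ)) atTop (𝓝 0) :=
        tendsto_const_nhds.div_atTop hntend
      refine squeeze_zero_norm (fun N => ?_) hlim
      have hpos : (0:ℝ) < (2 * N + 1) := by positivity
      have hn : ‖((2 * N + 1 : ℂ) ^ 2)⁻¹‖ = ((2 * N + 1 : ℝ) ^ 2)⁻¹ := by
        rw [norm_inv, norm_pow]
        congr 2
        exact_mod_cast Complex.norm_natCast (2 * N + 1)
      simp only [avg, mFourier_add_arg, ← Finset.sum_mul]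
      rw [norm_mul, norm_mul, hn, mFourier_norm_arg, mul_one]
      calc _ ≤ ((2 * N + 1 : ℝ) ^ 2)⁻¹ * (C * (2 * N + 1)) := by
            gcongr; exact hC N
        _ = C / (2 * N + 1) := by field_simp
  have htop : S = ⊤ := by
    rw [eq_top_iff, ← UnitAddTorus.span_mFourier_closure_eq_top]
    exact Submodule.topologicalClosure_minimal _ hspan hclosed
  have : f ∈ S := by rw [htop]; trivial
  exact this

/-- Pointwise ergodic theorem for the torus. -/
lemma ergodic_ae (a : (Fin 2 → ℤ) →+ T2)
    (ha : ∀ k : Fin 2 → ℤ, k ≠ 0 → ∃ n, UnitAddTorus.mFourier k (a n) ≠ 1)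
    (H : T2 → ℂ) (hH : Measurable H) (hHi : Integrable H (volume : Measure T2)) :
    ∀ᵐ x : T2, Tendsto (fun N => avg a H N x) atTop (𝓝 (∫ t, H t)) := by
  -- for each δ
  have main : ∀ δ : ℝ, 0 < δ →
      ∀ᵐ x : T2, ∀ᶠ N in atTop, ‖avg a H N x - ∫ t, H t‖ ≤ 3 * δ := by
    intro δ hδ
    rw [ae_iff]
    refine le_antisymm (le_of_forall_gt_imp_ge_of_dense fun η hη => ?_) bot_le
    -- choose ε with 25 ε / δ ≤ η
    obtain ⟨ε, hε, hεδ, hεη⟩ : ∃ ε : ℝ, 0 < ε ∧ ε ≤ δ ∧ ENNReal.ofReal (25 * ε / δ) ≤ η := by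
      by_cases hηt : η = ⊤
      · exact ⟨δ, hδ, le_rfl, by rw [hηt]; exact le_top⟩
      · have h0 : 0 < η.toReal := ENNReal.toReal_pos hη.ne' hηt
        refine ⟨min δ (η.toReal * δ / 25), by positivity, min_le_left _ _, ?_⟩
        refine ENNReal.ofReal_le_of_le_toReal ?_
        rw [div_le_iff₀ hδ]
        have := min_le_right δ (η.toReal * δ / 25)
        linarith
    obtain ⟨g, -, hg1, hgc, hgi⟩ := hHi.exists_hasCompactSupport_integral_sub_le hε
    set D : T2 → ℝ≥0∞ := fun t => ENNReal.ofReal ‖H t - g t‖ with hD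
    have hDm : Measurable D := (hH.sub hgc.measurable).norm.ennreal_ofReal
    have hDint : ∫⁻ t, D t ≤ ENNReal.ofReal ε := by
      have := ofReal_integral_eq_lintegral_ofReal (hHi.sub hgi).norm
        (Eventually.of_forall fun _ => norm_nonneg _)
      exact this.symm.le.trans (ENNReal.ofReal_le_ofReal hg1)
    have hmax := box_maximal_ineq (volume : Measure T2) a D hDm (ENNReal.ofReal δ)
    have hsub : {x : T2 | ¬ ∀ᶠ N in atTop, ‖avg a H N x - ∫ t, H t‖ ≤ 3 * δ} ⊆
        {x | ∃ N : ℕ, ENNReal.ofReal δ * ((2 * N + 1) ^ 2 : ℕ) ≤ ∑ m ∈ box N, D (a m + x)} := by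
      intro x hx
      by_contra hcon
      apply hx
      have hcon' : ∀ N : ℕ, ∑ m ∈ box N, D (a m + x) <
          ENNReal.ofReal δ * ((2 * N + 1) ^ 2 : ℕ) := by
        intro N
        by_contra hh
        exact hcon ⟨N, not_lt.1 hh⟩
      have hw := weyl_continuous a ha ⟨g, hgc⟩ x
      filter_upwards [(Metric.tendsto_atTop.1 hw δ hδ |> fun ⟨N0, h⟩ =>
        eventually_atTop.2 ⟨N0, h⟩ : ∀ᶠ N in atTop, dist (avg a g N x) (∫ t, g t) < δ)] with N hN
      have hpos : (0:ℝ) < (2 * N + 1) ^ 2 := by positivity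
      have h1 : ‖avg a H N x - avg a g N x‖ ≤ δ := by
        have hn : ‖((2 * N + 1 : ℂ) ^ 2)⁻¹‖ = ((2 * N + 1 : ℝ) ^ 2)⁻¹ := by
          rw [norm_inv, norm_pow]
          congr 2
          exact_mod_cast Complex.norm_natCast (2 * N + 1)
        have e : avg a H N x - avg a g N x =
            ((2 * N + 1 : ℂ) ^ 2)⁻¹ * ∑ m ∈ box N, (H (a m + x) - g (a m + x)) := by
          simp [avg, Finset.sum_sub_distrib, mul_sub]
        rw [e, norm_mul, hn, inv_mul_le_iff₀ hpos]
        refine (norm_sum_le _ _).trans ?_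
        have := hcon' N
        simp only [hD] at this
        rw [← ENNReal.ofReal_sum_of_nonneg (fun _ _ => norm_nonneg _),
          ← ENNReal.ofReal_natCast, ← ENNReal.ofReal_mul hδ.le,
          ENNReal.ofReal_lt_ofReal_iff (by positivity)] at this
        push_cast at this
        linarith
      have h2 : ‖(∫ t, g t) - ∫ t, H t‖ ≤ δ := by
        rw [norm_sub_rev, ← integral_sub hHi hgi]
        exact (norm_integral_le_integral_norm _).trans (hg1.trans hεδ)
      rw [dist_eq_norm] at hN
      calc ‖avg a H N x - ∫ t, H t‖ = ‖(avg a H N x - avg a g N x) +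
            (avg a g N x - ∫ t, g t) + ((∫ t, g t) - ∫ t, H t)‖ := by congr 1; ring
        _ ≤ _ := norm_add₃_le
        _ ≤ 3 * δ := by linarith
    refine (measure_mono hsub).trans (le_trans ?_ hεη)
    have hδ0 : ENNReal.ofReal δ ≠ 0 := (ENNReal.ofReal_pos.2 hδ).ne'
    rw [ENNReal.ofReal_div_of_pos hδ, ENNReal.le_div_iff_mul_le (Or.inl hδ0)
      (Or.inl ENNReal.ofReal_ne_top), mul_comm]
    refine hmax.trans ?_
    rw [ENNReal.ofReal_mul (by norm_num)]
    gcongr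
    simp
  have : ∀ᵐ x : T2, ∀ j : ℕ, ∀ᶠ N in atTop,
      ‖avg a H N x - ∫ t, H t‖ ≤ 3 * (1 / ((j : ℝ) + 1)) :=
    ae_all_iff.2 fun j => main _ (by positivity)
  filter_upwards [this] with x hx
  rw [Metric.tendsto_atTop]
  intro ε hε
  obtain ⟨j, hj⟩ := exists_nat_one_div_lt (show 0 < ε / 3 by positivity)
  obtain ⟨N0, hN0⟩ := eventually_atTop.1 (hx j)
  refine ⟨N0, fun N hN => ?_⟩
  rw [dist_eq_norm]
  have := hN0 N hN
  linarith

/-! ### Periodization on the plane -/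

/-- Half-open unit box with corner `b`. -/
def cube (b : Fin 2 → ℝ) : Set (Fin 2 → ℝ) := Set.univ.pi fun i => Set.Ioc (b i) (b i + 1)

lemma measurableSet_cube (b : Fin 2 → ℝ) : MeasurableSet (cube b) :=
  MeasurableSet.univ_pi fun _ => measurableSet_Ioc

lemma volume_cube (b : Fin 2 → ℝ) : volume (cube b) = 1 := by
  rw [cube, Real.volume_pi_Ioc]; simp

lemma iv_add (m n : Fin 2 → ℤ) : iv (m + n) = iv m + iv n := by
  ext i; simp [iv]

lemma iUnion_cube : ⋃ p : Fin 2 → ℤ, cube (iv p) = Set.univ := by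
  refine Set.eq_univ_of_forall fun w => Set.mem_iUnion.2 ⟨fun i => ⌈w i⌉ - 1, fun i _ => ?_⟩
  simp only [iv, Set.mem_Ioc]
  push_cast
  constructor
  · linarith [Int.ceil_lt_add_one (w i)]
  · linarith [Int.le_ceil (w i)]

lemma disjoint_cube : Pairwise (Function.onFun Disjoint fun p : Fin 2 → ℤ => cube (iv p)) := by
  intro p q hpq
  rw [Function.onFun, Set.disjoint_left]
  intro w hp hq
  apply hpq
  ext i
  have h1 := hp i trivial
  have h2 := hq i trivial
  simp only [iv, Set.mem_Ioc] at h1 h2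
  have h3 : (p i : ℝ) < q i + 1 := by linarith
  have h4 : (q i : ℝ) < p i + 1 := by linarith
  have h3' : p i < q i + 1 := by exact_mod_cast h3
  have h4' : q i < p i + 1 := by exact_mod_cast h4
  omega

def toT2 (w : Fin 2 → ℝ) : T2 := fun i => (w i : UnitAddCircle)

lemma toT2_add (w w' : Fin 2 → ℝ) : toT2 (w + w') = toT2 w + toT2 w' := by
  ext i; simp [toT2]

lemma measurePreserving_toT2 (b : Fin 2 → ℝ) :
    MeasurePreserving toT2 (volume.restrict (cube b)) (volume : Measure T2) := by
  have h := measurePreserving_pi (fun i : Fin 2 => volume.restrict (Set.Ioc (b i) (b i + 1)))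
    (fun _ : Fin 2 => (volume : Measure UnitAddCircle))
    (fun i => UnitAddCircle.measurePreserving_mk (b i))
  rw [← Measure.restrict_pi_pi] at h
  exact h

lemma ae_toT2 {P : T2 → Prop} (h : ∀ᵐ t, P t) : ∀ᵐ w : Fin 2 → ℝ, P (toT2 w) := by
  rw [← Measure.restrict_univ (μ := (volume : Measure (Fin 2 → ℝ))), ← iUnion_cube,
    ae_restrict_iUnion_iff]
  intro p
  exact (measurePreserving_toT2 (iv p)).quasiMeasurePreserving.ae h

lemma measurable_tsum' {X ι : Type*} [MeasurableSpace X] [Countable ι] {F : ι → X → ℝ}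
    (hF : ∀ i, Measurable (F i)) (hs : ∀ x, Summable fun i => F i x) :
    Measurable fun x => ∑' i, F i x := by
  refine measurable_of_tendsto_metrizable' (atTop : Filter (Finset ι))
    (f := fun s x => ∑ i ∈ s, F i x) (fun s => Finset.measurable_sum _ fun i _ => hF i) ?_
  rw [tendsto_pi_nhds]
  exact fun x => (hs x).hasSum

lemma summable_japanese {s : ℝ} (hs : 2 < s) :
    Summable fun p : Fin 2 → ℤ => (1 + ‖iv p‖) ^ (-s) := by
  have h := EisensteinSeries.summable_one_div_norm_rpow hs
  have hn : ∀ p : Fin 2 → ℤ, ‖iv p‖ = ‖p‖ := by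
    intro p
    simp only [Pi.norm_def]
    congr 2
  refine Summable.of_norm_bounded_eventually h ?_
  have : ∀ᶠ p : Fin 2 → ℤ in cofinite, p ≠ 0 := by
    simp [Filter.eventually_cofinite]
  filter_upwards [this] with p hp
  have hpos : 0 < ‖p‖ := norm_pos_iff.2 hp
  rw [hn, Real.norm_of_nonneg (by positivity)]
  exact Real.rpow_le_rpow_of_nonpos hpos (by linarith) (by linarith)

/-- Comparison of Japanese brackets. -/
lemma japanese_compare {s K a b : ℝ} (hs : 0 ≤ s) (ha : 0 ≤ a) (hb : 0 ≤ b)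
    (h : 1 + a ≤ K * (1 + b)) : (1 + b) ^ (-s) ≤ K ^ s * (1 + a) ^ (-s) := by
  have hK : 0 < K := by
    by_contra hK
    have : K * (1 + b) ≤ 0 := mul_nonpos_of_nonpos_of_nonneg (not_lt.1 hK) (by linarith)
    linarith
  rw [Real.rpow_neg (by linarith), Real.rpow_neg (by linarith), ← div_eq_mul_inv,
    inv_eq_one_div, div_le_div_iff₀ (by positivity) (by positivity), one_mul,
    ← Real.mul_rpow hK.le (by linarith)]
  exact Real.rpow_le_rpow (by linarith) h hs

lemma japanese_shift {s : ℝ} (hs : 0 ≤ s) (w : Fin 2 → ℝ) (y : Fin 2 → ℝ) :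
    (1 + ‖w + y‖) ^ (-s) ≤ (1 + ‖w‖) ^ s * (1 + ‖y‖) ^ (-s) := by
  refine japanese_compare hs (norm_nonneg _) (norm_nonneg _) ?_
  have h : ‖y‖ ≤ ‖w + y‖ + ‖w‖ := by
    have := norm_sub_le (w + y) w
    simpa using this
  nlinarith [norm_nonneg w, norm_nonneg (w + y)]

section Periodization

variable {G : (Fin 2 → ℝ) → ℝ} {C s : ℝ}

lemma decay_summable (hs : 2 < s) (hG : ∀ w, |G w| ≤ C * (1 + ‖w‖) ^ (-s))
    (w : Fin 2 → ℝ) : Summable fun p : Fin 2 → ℤ => G (w + iv p) := by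
  have hC : 0 ≤ C := by
    have := (abs_nonneg _).trans (hG 0)
    simpa using this
  refine Summable.of_norm_bounded
    (((summable_japanese hs).mul_left ((1 + ‖w‖) ^ s)).mul_left C) fun p => ?_
  exact (hG _).trans (mul_le_mul_of_nonneg_left (japanese_shift (by linarith) w _) hC)

lemma decay_integrable (hs : 2 < s) (hGm : Measurable G)
    (hG : ∀ w, |G w| ≤ C * (1 + ‖w‖) ^ (-s)) : Integrable G := by
  have h : Integrable (fun w : Fin 2 → ℝ => (1 + ‖w‖) ^ (-s)) :=
    integrable_one_add_norm (by simpa using hs)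
  exact (h.const_mul C).mono' hGm.aestronglyMeasurable (Eventually.of_forall hG)

lemma cube_norm_le {w : Fin 2 → ℝ} (hw : w ∈ cube 0) : ‖w‖ ≤ 1 := by
  rw [pi_norm_le_iff_of_nonneg zero_le_one]
  intro i
  have := hw i trivial
  simp only [Pi.zero_apply, zero_add, Set.mem_Ioc] at this
  rw [Real.norm_eq_abs, abs_le]
  constructor <;> linarith

lemma decay_cube (hs : 2 < s) (hG : ∀ w, |G w| ≤ C * (1 + ‖w‖) ^ (-s))
    {w : Fin 2 → ℝ} (hw : w ∈ cube 0) (p : Fin 2 → ℤ) :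
    ‖G (w + iv p)‖ ≤ C * (2 ^ s * (1 + ‖iv p‖) ^ (-s)) := by
  have hC : 0 ≤ C := by
    have := (abs_nonneg _).trans (hG 0)
    simpa using this
  refine (hG _).trans (mul_le_mul_of_nonneg_left ?_ hC)
  refine (japanese_shift (by linarith) w _).trans ?_
  have := cube_norm_le hw
  gcongr
  linarith

lemma periodization_measurable (hs : 2 < s) (hGm : Measurable G)
    (hG : ∀ w, |G w| ≤ C * (1 + ‖w‖) ^ (-s)) :
    Measurable fun w => ∑' p : Fin 2 → ℤ, G (w + iv p) :=
  measurable_tsum' (fun p => hGm.comp (measurable_id.add_const _)) (decay_summable hs hG)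

lemma periodization_integrableOn (hs : 2 < s) (hGm : Measurable G)
    (hG : ∀ w, |G w| ≤ C * (1 + ‖w‖) ^ (-s)) :
    IntegrableOn (fun w => ∑' p : Fin 2 → ℤ, G (w + iv p)) (cube 0) := by
  have hsum := ((summable_japanese hs).mul_left (2 ^ s)).mul_left C
  refine IntegrableOn.of_bound (by rw [volume_cube]; simp)
    (periodization_measurable hs hGm hG).aestronglyMeasurable
    (∑' p : Fin 2 → ℤ, C * (2 ^ s * (1 + ‖iv p‖) ^ (-s))) ?_
  refine (ae_restrict_iff' (measurableSet_cube 0)).2 (Eventually.of_forall fun w hw => ?_)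
  exact tsum_of_norm_bounded hsum.hasSum fun p => decay_cube hs hG hw p

lemma periodization_integral (hs : 2 < s) (hGm : Measurable G)
    (hG : ∀ w, |G w| ≤ C * (1 + ‖w‖) ^ (-s)) :
    ∫ w in cube 0, (∑' p : Fin 2 → ℤ, G (w + iv p)) = ∫ w, G w := by
  have hGi := decay_integrable hs hGm hG
  have hsum := ((summable_japanese hs).mul_left (2 ^ s)).mul_left C
  have hinteg : ∀ p : Fin 2 → ℤ,
      Integrable (fun w => G (w + iv p)) (volume.restrict (cube 0)) := fun p =>
    (hGi.comp_add_right (iv p)).integrableOn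
  rw [← integral_tsum_of_summable_integral_norm hinteg]
  · rw [← setIntegral_univ (f := G), ← iUnion_cube,
      integral_iUnion (fun _ => measurableSet_cube _) disjoint_cube hGi.integrableOn]
    refine tsum_congr fun p => ?_
    have hmp := measurePreserving_add_right (volume : Measure (Fin 2 → ℝ)) (iv p)
    have hpre : (fun w : Fin 2 → ℝ => w + iv p) ⁻¹' cube (iv p) = cube 0 := by
      ext w
      simp only [cube, Set.mem_preimage, Set.mem_pi, Set.mem_univ, true_implies, Set.mem_Ioc,
        Pi.add_apply, Pi.zero_apply]
      refine forall_congr' fun i => ?_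
      constructor <;> rintro ⟨h1, h2⟩ <;> constructor <;> linarith
    rw [← hpre]
    exact hmp.setIntegral_preimage_emb (measurableEmbedding_addRight _) G _
  · refine Summable.of_nonneg_of_le (fun p => integral_nonneg fun _ => norm_nonneg _)
      (fun p => ?_) hsum
    have := setIntegral_mono_on (hinteg p).norm (integrableOn_const (by rw [volume_cube]; simp))
      (measurableSet_cube 0) (fun w hw => decay_cube hs hG hw p)
    refine this.trans (le_of_eq ?_)
    simp [Measure.real, volume_cube]

end Periodization

/-- Pointwise ergodic theorem for periodizations on the plane. -/
lemma ergodic_plane {G : (Fin 2 → ℝ) → ℝ} {C s : ℝ} (hs : 2 < s) (hGm : Measurable G)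
    (hG : ∀ w, |G w| ≤ C * (1 + ‖w‖) ^ (-s)) (M : Matrix (Fin 2) (Fin 2) ℝ)
    (hM : ∀ k : Fin 2 → ℤ, (∀ n : Fin 2 → ℤ, ∃ j : ℤ, iv k ⬝ᵥ M.mulVec (iv n) = j) → k = 0) :
    ∀ᵐ w : Fin 2 → ℝ, Tendsto (fun N : ℕ => ((2 * N + 1 : ℝ) ^ 2)⁻¹ *
      ∑ n ∈ box N, ∑' p : Fin 2 → ℤ, G (w + M.mulVec (iv n) + iv p)) atTop (𝓝 (∫ w, G w)) := by
  set φ : (Fin 2 → ℝ) → ℝ := fun w => ∑' p : Fin 2 → ℤ, G (w + iv p) with hφ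
  have hφm : Measurable φ := periodization_measurable hs hGm hG
  have hφper : ∀ w m, φ (w + iv m) = φ w := by
    intro w m
    simp only [hφ]
    rw [← (Equiv.addLeft m).tsum_eq (fun p : Fin 2 → ℤ => G (w + iv p))]
    refine tsum_congr fun p => ?_
    simp only [Equiv.coe_addLeft, iv_add, add_assoc]
  set H : T2 → ℂ := fun t => ((φ fun i => (AddCircle.equivIoc 1 0 (t i)).1 : ℝ) : ℂ) with hH
  have hHm : Measurable H := by
    refine Complex.measurable_ofReal.comp (hφm.comp (measurable_pi_lambda _ fun i => ?_))
    exact measurable_subtype_coe.comp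
      ((AddCircle.measurableEquivIoc 1 0).measurable.comp (measurable_pi_apply i))
  have hHφ : ∀ w, H (toT2 w) = (φ w : ℂ) := by
    intro w
    simp only [hH, Complex.ofReal_inj]
    have : (fun i => (AddCircle.equivIoc 1 0 (toT2 w i)).1) =
        w + iv (fun i => -toIocDiv one_pos 0 (w i)) := by
      ext i
      have : (AddCircle.equivIoc 1 0 (toT2 w i)).1 = toIocMod one_pos 0 (w i) := rfl
      rw [this, toIocMod]
      simp [iv, sub_eq_add_neg]
    rw [this, hφper]
  have hmp := measurePreserving_toT2 0
  have hcomp : (fun w => H (toT2 w)) = fun w => (φ w : ℂ) := funext hHφ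
  have hHi : Integrable H (volume : Measure T2) := by
    rw [← hmp.integrable_comp hHm.aestronglyMeasurable]
    change Integrable (fun w => H (toT2 w)) _
    rw [hcomp]
    exact (periodization_integrableOn hs hGm hG).ofReal
  have hHint : ∫ t, H t = ((∫ w, G w : ℝ) : ℂ) := by
    rw [← hmp.map_eq, integral_map hmp.measurable.aemeasurable hHm.aestronglyMeasurable]
    rw [hcomp, integral_complex_ofReal, periodization_integral hs hGm hG]
  let a : (Fin 2 → ℤ) →+ T2 :=
    { toFun := fun n => toT2 (M.mulVec (iv n))
      map_zero' := by
        have : iv 0 = 0 := by ext i; simp [iv]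
        rw [this, Matrix.mulVec_zero]
        ext i; simp [toT2]
      map_add' := fun m n => by rw [iv_add, Matrix.mulVec_add, toT2_add] }
  have ha : ∀ k : Fin 2 → ℤ, k ≠ 0 → ∃ n, UnitAddTorus.mFourier k (a n) ≠ 1 := by
    intro k hk
    by_contra! hcon
    refine hk (hM k fun n => ?_)
    have h := hcon n
    have e : UnitAddTorus.mFourier k (a n) =
        Complex.exp (2 * π * Complex.I * ((iv k ⬝ᵥ M.mulVec (iv n) : ℝ) : ℂ)) := by
      change ∏ i, fourier (k i) ((M.mulVec (iv n) i : ℝ) : UnitAddCircle) = _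
      rw [Fin.prod_univ_two, fourier_coe_apply, fourier_coe_apply, ← Complex.exp_add]
      congr 1
      simp only [dotProduct, Fin.sum_univ_two, iv]
      push_cast
      ring
    rw [e, Complex.exp_eq_one_iff] at h
    obtain ⟨j, hj⟩ := h
    refine ⟨j, ?_⟩
    have h2 : (2 * π * Complex.I) ≠ 0 := Complex.two_pi_I_ne_zero
    have : ((iv k ⬝ᵥ M.mulVec (iv n) : ℝ) : ℂ) = ((j : ℝ) : ℂ) := by
      apply mul_left_cancel₀ h2
      rw [hj]; push_cast; ring
    exact_mod_cast this
  filter_upwards [ae_toT2 (ergodic_ae a ha H hHm hHi)] with w hw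
  rw [hHint] at hw
  have := (Complex.continuous_re.tendsto _).comp hw
  rw [Complex.ofReal_re] at this
  refine this.congr fun N => ?_
  have e : avg a H N (toT2 w) = ((((2 * N + 1 : ℝ) ^ 2)⁻¹ *
      ∑ n ∈ box N, φ (w + M.mulVec (iv n)) : ℝ) : ℂ) := by
    have : ∀ m, H (a m + toT2 w) = (φ (w + M.mulVec (iv m)) : ℂ) := by
      intro m
      change H (toT2 (M.mulVec (iv m)) + toT2 w) = _
      rw [← toT2_add, hHφ, add_comm]
    simp only [avg, this]
    push_cast
    rfl
  simp only [Function.comp, e, Complex.ofReal_re, hφ]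

/-! ### Core limit theorem -/

lemma measurable_mulVec (A : Matrix (Fin 2) (Fin 2) ℝ) :
    Measurable fun x : Fin 2 → ℝ => A.mulVec x :=
  (Continuous.matrix_mulVec continuous_const continuous_id).measurable

lemma integral_comp_mulVec (A : Matrix (Fin 2) (Fin 2) ℝ) (hA : A.det ≠ 0)
    (f : (Fin 2 → ℝ) → ℝ) (hf : Measurable f) :
    ∫ w, f (A.mulVec w) = |A.det|⁻¹ * ∫ w, f w := by
  have h := Real.map_matrix_volume_pi_eq_smul_volume_pi hA
  have h2 := integral_map (μ := volume) (φ := fun x : Fin 2 → ℝ => A.mulVec x)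
    (measurable_mulVec A).aemeasurable (f := f) hf.aestronglyMeasurable
  rw [← h2]
  change ∫ y, f y ∂(Measure.map (Matrix.toLin' A) volume) = _
  rw [h, integral_smul_measure, ENNReal.toReal_ofReal (abs_nonneg _), abs_inv, smul_eq_mul]

lemma ae_comp_mulVec (A : Matrix (Fin 2) (Fin 2) ℝ) (hA : A.det ≠ 0)
    {P : (Fin 2 → ℝ) → Prop} (h : ∀ᵐ w, P w) : ∀ᵐ w, P (A.mulVec w) := by
  have hq : Measure.QuasiMeasurePreserving (fun x : Fin 2 → ℝ => A.mulVec x) volume volume := by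
    refine ⟨measurable_mulVec A, ?_⟩
    change Measure.map (Matrix.toLin' A) volume ≪ volume
    rw [Real.map_matrix_volume_pi_eq_smul_volume_pi hA]
    exact Measure.smul_absolutelyContinuous
  exact hq.ae h

lemma decay_lin {s : ℝ} (hs : 0 ≤ s) (A : Matrix (Fin 2) (Fin 2) ℝ) (hA : A.det ≠ 0)
    (c : Fin 2 → ℝ) : ∃ K : ℝ, ∀ w, (1 + ‖A.mulVec w + c‖) ^ (-s) ≤ K * (1 + ‖w‖) ^ (-s) := by
  set L := ‖LinearMap.toContinuousLinearMap (Matrix.mulVecLin A⁻¹)‖ with hL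
  have hL0 : 0 ≤ L := norm_nonneg _
  refine ⟨(1 + L + L * ‖c‖) ^ s, fun w => ?_⟩
  refine japanese_compare hs (norm_nonneg _) (norm_nonneg _) ?_
  have h1 : ‖w‖ ≤ L * ‖A.mulVec w‖ := by
    have := (LinearMap.toContinuousLinearMap (Matrix.mulVecLin A⁻¹)).le_opNorm (A.mulVec w)
    have e : (LinearMap.toContinuousLinearMap (Matrix.mulVecLin A⁻¹)) (A.mulVec w) = w := by
      change A⁻¹.mulVec (A.mulVec w) = w
      rw [Matrix.mulVec_mulVec, Matrix.nonsing_inv_mul A (isUnit_iff_ne_zero.2 hA),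
        Matrix.one_mulVec]
    rw [e] at this
    exact this
  have h2 : ‖A.mulVec w‖ ≤ ‖A.mulVec w + c‖ + ‖c‖ := by
    have := norm_sub_le (A.mulVec w + c) c
    simpa using this
  have h3 : ‖w‖ ≤ L * (‖A.mulVec w + c‖ + ‖c‖) := h1.trans (by gcongr)
  nlinarith [norm_nonneg c, norm_nonneg (A.mulVec w + c), mul_nonneg hL0 (norm_nonneg c),
    mul_nonneg (mul_nonneg hL0 (norm_nonneg c)) (norm_nonneg (A.mulVec w + c))]

lemma core_limit (A1 A2 AM : Matrix (Fin 2) (Fin 2) ℝ) (h1 : A1.det ≠ 0) (h2 : A2.det ≠ 0)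
    (hMd : AM.det ≠ 0) (hrel : AM⁻¹ = A1⁻¹ - A2⁻¹)
    (hnr : ∀ k m : Fin 2 → ℤ, (A1⁻¹)ᵀ.mulVec (iv k) = (A2⁻¹)ᵀ.mulVec (iv m) → m = 0)
    (g : (Fin 2 → ℝ) → (Fin 2 → ℝ) → ℝ) (hgm : Measurable (Function.uncurry g))
    (hper : ∀ x y m, g (x + AM.mulVec (iv m)) (y + AM.mulVec (iv m)) = g x y)
    {C s : ℝ} (hs : 2 < s) (hg : ∀ x y, |g x y| ≤ C * (1 + ‖x - y‖) ^ (-s)) :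
    (∀ x y, Summable fun p : Fin 2 → ℤ => g x (A2.mulVec (iv p) + y)) ∧
    ∀ᵐ γ : (Fin 2 → ℝ) × (Fin 2 → ℝ), Tendsto (fun N : ℕ => ((2 * N + 1 : ℝ) ^ 2)⁻¹ *
      ∑ n ∈ box N, ∑' p : Fin 2 → ℤ, g (A1.mulVec (iv n) + γ.1) (A2.mulVec (iv p) + γ.2)) atTop
      (𝓝 (|A1.det| * |AM.det|⁻¹ * ∫ ξ, g (A1.mulVec ξ + γ.1) (A2.mulVec ξ + γ.2))) := by
  have hu1 := isUnit_iff_ne_zero.2 h1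
  have hu2 := isUnit_iff_ne_zero.2 h2
  have huM := isUnit_iff_ne_zero.2 hMd
  have hC : 0 ≤ C := by
    have := (abs_nonneg _).trans (hg 0 0)
    simpa using this
  have hgm2 : ∀ {X : Type} [MeasurableSpace X] {f1 f2 : X → Fin 2 → ℝ}, Measurable f1 →
      Measurable f2 → Measurable fun x => g (f1 x) (f2 x) := by
    intro X _ f1 f2 hf1 hf2
    exact hgm.comp (hf1.prodMk hf2)
  set B := A2 * A1⁻¹ with hB
  have hBA1 : B * A1 = A2 := by
    rw [hB, Matrix.mul_assoc, Matrix.nonsing_inv_mul _ hu1, Matrix.mul_one]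
  have hA1inv : A1⁻¹ = AM⁻¹ + A2⁻¹ := by rw [hrel]; abel
  have hBAM : B * AM = AM + A2 := by
    rw [hB, hA1inv, Matrix.mul_add, Matrix.add_mul, Matrix.mul_assoc,
      Matrix.nonsing_inv_mul _ huM, Matrix.mul_nonsing_inv _ hu2, Matrix.mul_one, Matrix.one_mul,
      add_comm]
  set M := AM⁻¹ * A1 with hMdef
  have hAMM : AM * M = A1 := by
    rw [hMdef, ← Matrix.mul_assoc, Matrix.mul_nonsing_inv _ huM, Matrix.one_mul]
  have hMnr : ∀ k : Fin 2 → ℤ,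
      (∀ n : Fin 2 → ℤ, ∃ j : ℤ, iv k ⬝ᵥ M.mulVec (iv n) = j) → k = 0 := by
    intro k hk
    choose j hj using fun i : Fin 2 => hk (Pi.single i 1)
    have e1 : Mᵀ.mulVec (iv k) = iv j := by
      ext i
      have : iv (Pi.single i 1) = Pi.single i 1 := by
        ext l
        by_cases hl : l = i
        · subst hl; simp [iv]
        · simp [iv, hl]
      have hh := hj i
      rw [this, Matrix.dotProduct_mulVec, dotProduct_single_one] at hh
      rw [Matrix.mulVec_transpose]
      exact hh
    have e2 : M = 1 - A2⁻¹ * A1 := by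
      rw [hMdef, hrel, Matrix.sub_mul, Matrix.nonsing_inv_mul _ hu1]
    refine hnr (k - j) k ?_
    have e3 : iv (k - j) = iv k - iv j := by ext i; simp [iv]
    rw [e3, ← e1, e2, Matrix.transpose_sub, Matrix.transpose_one, Matrix.sub_mulVec,
      Matrix.one_mulVec, sub_sub_cancel, Matrix.mulVec_mulVec, Matrix.transpose_mul,
      ← Matrix.mul_assoc, ← Matrix.transpose_mul, Matrix.mul_nonsing_inv _ hu1,
      Matrix.transpose_one, Matrix.one_mul]
  -- summability
  have hsumm : ∀ x y, Summable fun p : Fin 2 → ℤ => g x (A2.mulVec (iv p) + y) := by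
    intro x y
    obtain ⟨K, hK⟩ := decay_lin (s := s) (by linarith) A2 h2 (y - x)
    refine Summable.of_norm_bounded (((summable_japanese hs).mul_left K).mul_left C) fun p => ?_
    refine (hg _ _).trans (mul_le_mul_of_nonneg_left ?_ hC)
    refine le_trans (le_of_eq ?_) (hK (iv p))
    congr 2
    rw [norm_sub_rev]
    congr 1
    abel
  refine ⟨hsumm, ?_⟩
  -- the good set
  set Good : (Fin 2 → ℝ) × (Fin 2 → ℝ) → Prop := fun γ =>
    Tendsto (fun N : ℕ => ((2 * N + 1 : ℝ) ^ 2)⁻¹ *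
      ∑ n ∈ box N, ∑' p : Fin 2 → ℤ, g (A1.mulVec (iv n) + γ.1) (A2.mulVec (iv p) + γ.2)) atTop
      (𝓝 (|A1.det| * |AM.det|⁻¹ * ∫ ξ, g (A1.mulVec ξ + γ.1) (A2.mulVec ξ + γ.2))) with hGood
  have hGoodm : MeasurableSet {γ | Good γ} := by
    refine measurableSet_tendsto_fun (fun N => ?_) ?_
    · refine (Finset.measurable_sum _ fun n _ => ?_).const_mul _
      refine measurable_tsum' (fun p => ?_) (fun γ => hsumm _ _)
      exact hgm2 (measurable_fst.const_add _) (measurable_snd.const_add _)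
    · refine Measurable.const_mul ?_ _
      have : Measurable fun q : ((Fin 2 → ℝ) × (Fin 2 → ℝ)) × (Fin 2 → ℝ) =>
          g (A1.mulVec q.2 + q.1.1) (A2.mulVec q.2 + q.1.2) :=
        hgm2 (((measurable_mulVec A1).comp measurable_snd).add
            (measurable_fst.comp measurable_fst))
          (((measurable_mulVec A2).comp measurable_snd).add
            (measurable_snd.comp measurable_fst))
      exact (this.stronglyMeasurable.integral_prod_right').measurable
  -- slices
  have hslice : ∀ c : Fin 2 → ℝ, ∀ᵐ x : Fin 2 → ℝ, Good (x, c + B.mulVec x) := by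
    intro c
    set G0 : (Fin 2 → ℝ) → ℝ := fun z => g z (c + B.mulVec z) with hG0
    have hG0m : Measurable G0 := hgm2 measurable_id ((measurable_mulVec B).const_add _)
    set G : (Fin 2 → ℝ) → ℝ := fun w => G0 (AM.mulVec w) with hG
    have hGm : Measurable G := hG0m.comp (measurable_mulVec AM)
    obtain ⟨K, hK⟩ := decay_lin (s := s) (by linarith) A2 h2 c
    have hGd : ∀ w, |G w| ≤ (C * K) * (1 + ‖w‖) ^ (-s) := by
      intro w
      rw [mul_assoc]
      refine (hg _ _).trans (mul_le_mul_of_nonneg_left ?_ hC)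
      refine le_trans (le_of_eq ?_) (hK w)
      congr 2
      rw [norm_sub_rev, Matrix.mulVec_mulVec, hBAM, Matrix.add_mulVec]
      congr 1
      abel
    have hmain := ergodic_plane hs hGm hGd M hMnr
    have hx := ae_comp_mulVec AM⁻¹ (by
      rw [Matrix.det_nonsing_inv]; simpa using hMd) hmain
    filter_upwards [hx] with x hx
    have hlim : |A1.det| * |AM.det|⁻¹ *
        (∫ ξ, g (A1.mulVec ξ + x) (A2.mulVec ξ + (c + B.mulVec x))) = ∫ w, G w := by
      have i1 : ∫ w, G w = |AM.det|⁻¹ * ∫ z, G0 z := integral_comp_mulVec AM hMd G0 hG0m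
      have i2 : ∫ ξ, g (A1.mulVec ξ + x) (A2.mulVec ξ + (c + B.mulVec x)) =
          |A1.det|⁻¹ * ∫ z, G0 z := by
        rw [← integral_add_right_eq_self G0 x,
          ← integral_comp_mulVec A1 h1 (fun z => G0 (z + x)) (hG0m.comp (measurable_id.add_const _))]
        refine integral_congr_ae (Eventually.of_forall fun ξ => ?_)
        simp only [hG0, Matrix.mulVec_add, Matrix.mulVec_mulVec, hBA1]
        congr 1
        abel
      rw [i1, i2]
      have : |A1.det| ≠ 0 := abs_ne_zero.2 h1
      field_simp
    simp only [hGood]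
    rw [hlim]
    refine hx.congr fun N => ?_
    congr 1
    refine Finset.sum_congr rfl fun n _ => ?_
    rw [← (Equiv.addLeft n).tsum_eq
      (fun p : Fin 2 → ℤ => g (A1.mulVec (iv n) + x) (A2.mulVec (iv p) + (c + B.mulVec x)))]
    refine tsum_congr fun p => ?_
    simp only [hG, hG0, Equiv.coe_addLeft, Matrix.mulVec_add, Matrix.mulVec_mulVec, iv_add]
    rw [← hper (A1.mulVec (iv n) + x) _ p]
    have f1 : AM * AM⁻¹ = 1 := Matrix.mul_nonsing_inv _ huM
    have f3 : (AM + A2) * AM⁻¹ = B := by rw [← hBAM, Matrix.mul_assoc, f1, Matrix.mul_one]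
    have f4 : (AM + A2) * M = A2 := by rw [← hBAM, Matrix.mul_assoc, hAMM, hBA1]
    simp only [hAMM, f1, hBAM, f3, f4, Matrix.one_mulVec, Matrix.add_mulVec]
    congr 1 <;> abel
  -- Fubini + shear
  have hprod : ∀ᵐ q : (Fin 2 → ℝ) × (Fin 2 → ℝ), Good (q.2, q.1 + B.mulVec q.2) := by
    have hm : MeasurableSet {q : (Fin 2 → ℝ) × (Fin 2 → ℝ) | Good (q.2, q.1 + B.mulVec q.2)} := by
      have hφ : Measurable fun q : (Fin 2 → ℝ) × (Fin 2 → ℝ) => (q.2, q.1 + B.mulVec q.2) :=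
        measurable_snd.prodMk (measurable_fst.add ((measurable_mulVec B).comp measurable_snd))
      exact hφ hGoodm
    exact (Measure.ae_prod_iff_ae_ae hm).2 (Eventually.of_forall hslice)
  -- the inverse shear
  have hshear : MeasurePreserving
      (fun q : (Fin 2 → ℝ) × (Fin 2 → ℝ) => (q.1, q.2 - B.mulVec q.1)) volume volume := by
    refine MeasurePreserving.skew_product (g := fun a b => b - B.mulVec a)
      (MeasurePreserving.id volume) ?_ ?_
    · exact measurable_snd.sub ((measurable_mulVec B).comp measurable_fst)
    · refine Eventually.of_forall fun a => ?_
      exact (measurePreserving_sub_right volume (B.mulVec a)).map_eq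
  have hswap : MeasurePreserving
      (Prod.swap : (Fin 2 → ℝ) × (Fin 2 → ℝ) → _) volume volume :=
    Measure.measurePreserving_swap
  have := hshear.quasiMeasurePreserving.ae (hswap.quasiMeasurePreserving.ae hprod)
  filter_upwards [this] with γ hγ
  have e : γ.2 - B.mulVec γ.1 + B.mulVec γ.1 = γ.2 := sub_add_cancel _ _
  simp only [Prod.fst_swap, Prod.snd_swap, e] at hγ
  exact hγ

/-! ### Assembly -/

lemma iv_neg (n : Fin 2 → ℤ) : iv (-n) = -iv n := by
  ext i; simp [iv]

lemma iv_eq_zero {n : Fin 2 → ℤ} (h : iv n = 0) : n = 0 := by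
  ext i
  have := congrFun h i
  simpa [iv] using this

lemma layer_limit {P Q : Type} [Fintype P] [Fintype Q]
    (A1 A2 AM : Matrix (Fin 2) (Fin 2) ℝ) (h1 : A1.det ≠ 0) (h2 : A2.det ≠ 0)
    (hMd : AM.det ≠ 0) (hrel : AM⁻¹ = A1⁻¹ - A2⁻¹)
    (hnr : ∀ k m : Fin 2 → ℤ, (A1⁻¹)ᵀ.mulVec (iv k) = (A2⁻¹)ᵀ.mulVec (iv m) → m = 0)
    (g : P → Q → (Fin 2 → ℝ) → (Fin 2 → ℝ) → ℝ)
    (hgm : ∀ a b, Measurable (Function.uncurry (g a b)))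
    (hper : ∀ a b x y m, g a b (x + AM.mulVec (iv m)) (y + AM.mulVec (iv m)) = g a b x y)
    {s : ℝ} (hs : 2 < s)
    (hg : ∀ a b, ∃ C : ℝ, ∀ x y, |g a b x y| ≤ C * (1 + ‖x - y‖) ^ (-s)) :
    ∀ᵐ γ : (Fin 2 → ℝ) × (Fin 2 → ℝ), Tendsto (fun N : ℕ => (|A1.det| * (2 * N + 1 : ℝ) ^ 2)⁻¹ *
      ∑ n ∈ box N, ∑ a : P, (1 / 2 : ℝ) * ∑' p : (Fin 2 → ℤ) × Q,
        g a p.2 (A1.mulVec (iv n) + γ.1) (A2.mulVec (iv p.1) + γ.2)) atTop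
      (𝓝 ((2 * |AM.det| : ℝ)⁻¹ *
        ∑ a : P, ∑ b : Q, ∫ ξ, g a b (A1.mulVec ξ + γ.1) (A2.mulVec ξ + γ.2))) := by
  choose C hC using hg
  have key := fun a b =>
    core_limit A1 A2 AM h1 h2 hMd hrel hnr (g a b) (hgm a b) (hper a b) hs (hC a b)
  have hae : ∀ᵐ γ : (Fin 2 → ℝ) × (Fin 2 → ℝ), ∀ a b, _ :=
    ae_all_iff.2 fun a => ae_all_iff.2 fun b => (key a b).2
  filter_upwards [hae] with γ hγ
  have hsplit : ∀ (n : Fin 2 → ℤ) (a : P), ∑' p : (Fin 2 → ℤ) × Q,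
      g a p.2 (A1.mulVec (iv n) + γ.1) (A2.mulVec (iv p.1) + γ.2) =
      ∑ b : Q, ∑' p : Fin 2 → ℤ, g a b (A1.mulVec (iv n) + γ.1) (A2.mulVec (iv p) + γ.2) := by
    intro n a
    have hS : ∀ b, Summable fun p : Fin 2 → ℤ =>
        g a b (A1.mulVec (iv n) + γ.1) (A2.mulVec (iv p) + γ.2) := fun b => (key a b).1 _ _
    have hF : Summable fun p : Q × (Fin 2 → ℤ) =>
        g a p.1 (A1.mulVec (iv n) + γ.1) (A2.mulVec (iv p.2) + γ.2) := by
      rw [← summable_norm_iff]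
      refine (summable_prod_of_nonneg (fun _ => norm_nonneg _)).2 ⟨fun b => (hS b).norm, ?_⟩
      exact (hasSum_fintype _).summable
    rw [← (Equiv.prodComm Q (Fin 2 → ℤ)).tsum_eq]
    rw [← tsum_fintype (L := .unconditional Q)]
    exact hF.tsum_prod' hS
  have hlim := (tendsto_finsetSum Finset.univ fun a _ =>
    tendsto_finsetSum Finset.univ fun b _ => hγ a b).const_mul (|A1.det|⁻¹ * (1 / 2))
  have hd1 : |A1.det| ≠ 0 := abs_ne_zero.2 h1
  have hdM : |AM.det| ≠ 0 := abs_ne_zero.2 hMd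
  convert hlim using 2
  · simp only [hsplit]
    rename_i N
    have e : ∀ n : Fin 2 → ℤ, ∑ a : P, (1 / 2 : ℝ) * ∑ b : Q, ∑' p : Fin 2 → ℤ,
        g a b (A1.mulVec (iv n) + γ.1) (A2.mulVec (iv p) + γ.2) = (1 / 2 : ℝ) *
        ∑ a : P, ∑ b : Q, ∑' p : Fin 2 → ℤ,
        g a b (A1.mulVec (iv n) + γ.1) (A2.mulVec (iv p) + γ.2) := fun n => by
      rw [Finset.mul_sum]
    simp only [e, ← Finset.mul_sum]
    rw [Finset.sum_comm]
    simp only [fun a : P => Finset.sum_comm (s := box N) (t := (Finset.univ : Finset Q))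
      (f := fun n b => ∑' p : Fin 2 → ℤ,
        g a b (A1.mulVec (iv n) + γ.1) (A2.mulVec (iv p) + γ.2))]
    rw [mul_inv]
    ring
  · simp only [← Finset.mul_sum]
    rw [mul_inv]
    field_simp

lemma emb_add' (x y : Fin 2 → ℝ) : emb (x + y) = emb x + emb y := by
  ext i; fin_cases i <;> simp [emb]

lemma abs_le_norm3 (z : Fin 3 → ℝ) (i : Fin 3) : |z i| ≤ norm3 z := by
  unfold norm3
  apply Real.abs_le_sqrt
  fin_cases i <;> simp <;> nlinarith [sq_nonneg (z 0), sq_nonneg (z 1), sq_nonneg (z 2)]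

lemma one_le_jap3 (z : Fin 3 → ℝ) : 1 ≤ jap3 z := by
  unfold jap3
  rw [Real.one_le_sqrt]
  nlinarith [sq_nonneg (norm3 z)]

lemma norm3_le_jap3 (z : Fin 3 → ℝ) : norm3 z ≤ jap3 z := by
  unfold jap3
  apply Real.le_sqrt_of_sq_le
  linarith

lemma le_double_iSup {X Y : Type} {f : X → Y → ℝ} {C : ℝ} (hC : ∀ x y, f x y ≤ C)
    (x : X) (y : Y) : f x y ≤ ⨆ x, ⨆ y, f x y := by
  have b1 : ∀ x, BddAbove (Set.range (f x)) := fun x => ⟨C, by rintro _ ⟨y, rfl⟩; exact hC x y⟩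
  have b2 : BddAbove (Set.range fun x => ⨆ y, f x y) := by
    refine ⟨C, ?_⟩
    rintro _ ⟨x', rfl⟩
    have : Nonempty Y := ⟨y⟩
    exact ciSup_le (hC x')
  exact (le_ciSup (b1 x) y).trans (le_ciSup b2 x)

lemma pair_decay {r L C C1 C2 : ℝ} (hr : 1 < r) (v : (Fin 3 → ℝ) → ℝ)
    (hv : ∀ x ∈ slab L, jap3 x ^ (2 * r) * |v x| ≤ C) (t1 t2 : Fin 2 → ℝ)
    (w1 w2 : (Fin 2 → ℝ) → Fin 3 → ℝ) (h1 : ∀ x, norm3 (w1 x) ≤ C1) (h2 : ∀ x, norm3 (w2 x) ≤ C2)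
    (hL : ∀ x y, |w1 x 2| + |w2 y 2| ≤ L) :
    ∃ C' : ℝ, ∀ x y, |v ((emb x + emb t1 + w1 x) - (emb y + emb t2 + w2 y))| ≤
      C' * (1 + ‖x - y‖) ^ (-(2 * r)) := by
  refine ⟨C * (2 + (‖t1 - t2‖ + C1 + C2)) ^ (2 * r), fun x y => ?_⟩
  set z := (emb x + emb t1 + w1 x) - (emb y + emb t2 + w2 y) with hz
  have hz2 : z 2 = w1 x 2 - w2 y 2 := by
    change (0 : ℝ) + 0 + w1 x 2 - (0 + 0 + w2 y 2) = _
    ring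
  have hslab : z ∈ slab L := by
    change z 2 ∈ Set.Icc (-L) L
    rw [hz2]
    have a1 := hL x y
    have a2 := abs_le.1 (le_refl |w1 x 2|)
    have a3 := abs_le.1 (le_refl |w2 y 2|)
    constructor <;> linarith [a2.1, a2.2, a3.1, a3.2]
  have hvz := hv z hslab
  have hj := one_le_jap3 z
  have hjp : 0 < jap3 z ^ (2 * r) := Real.rpow_pos_of_pos (by linarith) _
  have hC : 0 ≤ C := le_trans (by positivity) hvz
  have hC1 : 0 ≤ C1 := le_trans (Real.sqrt_nonneg _) (h1 x)
  have hC2 : 0 ≤ C2 := le_trans (Real.sqrt_nonneg _) (h2 y)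
  have hnorm : ‖x - y‖ ≤ jap3 z + (‖t1 - t2‖ + C1 + C2) := by
    have hcoord : ∀ (i : Fin 2) (j : Fin 3), z j = x i + t1 i + w1 x j - (y i + t2 i + w2 y j) →
        |x i - y i| ≤ jap3 z + (‖t1 - t2‖ + C1 + C2) := by
      intro i j hij
      have b1 := abs_le.1 ((abs_le_norm3 z j).trans (norm3_le_jap3 z))
      have b2 := abs_le.1 ((abs_le_norm3 (w1 x) j).trans (h1 x))
      have b3 := abs_le.1 ((abs_le_norm3 (w2 y) j).trans (h2 y))
      have b4 := abs_le.1 (norm_le_pi_norm (t1 - t2) i)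
      simp only [Pi.sub_apply] at b4
      rw [abs_le]
      constructor <;> linarith [b1.1, b1.2, b2.1, b2.2, b3.1, b3.2, b4.1, b4.2]
    refine (pi_norm_le_iff_of_nonneg (by positivity)).2 fun i => ?_
    fin_cases i
    · exact hcoord 0 0 rfl
    · exact hcoord 1 1 rfl
  have hcmp := japanese_compare (s := 2 * r) (K := 2 + (‖t1 - t2‖ + C1 + C2)) (a := ‖x - y‖)
    (b := jap3 z - 1) (by linarith) (norm_nonneg _) (by linarith) (by
      have : 0 ≤ ‖t1 - t2‖ + C1 + C2 := by positivity
      nlinarith)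
  rw [add_sub_cancel] at hcmp
  have hle : |v z| ≤ C * jap3 z ^ (-(2 * r)) := by
    rw [Real.rpow_neg (by linarith), ← div_eq_mul_inv, le_div_iff₀ hjp]
    linarith
  calc |v z| ≤ C * jap3 z ^ (-(2 * r)) := hle
    _ ≤ C * ((2 + (‖t1 - t2‖ + C1 + C2)) ^ (2 * r) * (1 + ‖x - y‖) ^ (-(2 * r))) := by gcongr
    _ = _ := by ring

lemma measurable_emb : Measurable emb := by
  refine measurable_pi_iff.2 fun i => ?_
  fin_cases i
  · exact measurable_pi_apply 0
  · exact measurable_pi_apply 1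
  · exact measurable_const

lemma det_Rot (φ : ℝ) : (Rot φ).det = 1 := by
  simp only [Rot, Matrix.det_fin_two_of]
  nlinarith [Real.sin_sq_add_cos_sq φ]

lemma nonres_of_inc {A1 A2 : Matrix (Fin 2) (Fin 2) ℝ} (h1 : A1.det ≠ 0) (h2 : A2.det ≠ 0)
    (hinc : Incommensurate (recip A1) (recip A2)) (k m : Fin 2 → ℤ)
    (h : (A1⁻¹)ᵀ.mulVec (iv k) = (A2⁻¹)ᵀ.mulVec (iv m)) : k = 0 ∧ m = 0 := by
  have inj : ∀ (A : Matrix (Fin 2) (Fin 2) ℝ) (n : Fin 2 → ℤ), A.det ≠ 0 →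
      (recip A).mulVec (iv n) = 0 → n = 0 := by
    intro A n hA hn
    apply iv_eq_zero
    refine Matrix.eq_zero_of_mulVec_eq_zero ?_ hn
    simp only [recip, Matrix.det_smul, Matrix.det_transpose, Matrix.det_nonsing_inv]
    have : (2 * π : ℝ) ≠ 0 := by positivity
    simp [hA, Real.pi_ne_zero]
  have := hinc _ ⟨k, rfl⟩ _ ⟨-m, rfl⟩ (by
    simp only [recip, iv_neg, Matrix.mulVec_neg, Matrix.smul_mulVec, h, add_neg_cancel])
  refine ⟨inj A1 k h1 this.1, ?_⟩
  have := inj A2 (-m) h2 this.2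
  simpa using this

/-- Theorem: almost sure thermodynamic limit of the interlayer energy
density for rough displacements and interlayer pair potentials. -/
theorem interlayer_energy_rough_limit (θ q r : ℝ) (hq : 0 < q) (hr : 1 < r)
    (A A1 A2 B1 B2 BM AM : Matrix (Fin 2) (Fin 2) ℝ)
    (hA : IsUnit A.det)
    (hA1 : A1 = (Real.sqrt q)⁻¹ • (Rot (-(θ / 2)) * A))
    (hA2 : A2 = Real.sqrt q • (Rot (θ / 2) * A))
    (hB1 : B1 = recip A1) (hB2 : B2 = recip A2)
    (hBM : BM = B1 - B2) (hBMinv : IsUnit BM.det)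
    (hAM : AM = recip BM)
    (hinc : Incommensurate B1 B2) (hincstar : Incommensurate A1 A2)
    (𝓐1 𝓐2 : Type) [Fintype 𝓐1] [Fintype 𝓐2] [Nonempty 𝓐1] [Nonempty 𝓐2]
    (τ1 : 𝓐1 → Fin 2 → ℝ) (τ2 : 𝓐2 → Fin 2 → ℝ)
    (u1 : (Fin 2 → ℝ) → 𝓐1 → Fin 3 → ℝ) (u2 : (Fin 2 → ℝ) → 𝓐2 → Fin 3 → ℝ)
    -- u_k(·, α_k) ∈ L^∞(ℝ²; ℝ³), measurable and 𝓡_𝓜-periodic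
    (hu1meas : ∀ α, Measurable fun x => u1 x α)
    (hu2meas : ∀ α, Measurable fun x => u2 x α)
    (hu1 : ∃ C : ℝ, ∀ x α, norm3 (u1 x α) ≤ C)
    (hu2 : ∃ C : ℝ, ∀ x α, norm3 (u2 x α) ≤ C)
    (hu1per : ∀ (x : Fin 2 → ℝ), ∀ rM ∈ lat AM, ∀ α, u1 (x + rM) α = u1 x α)
    (hu2per : ∀ (x : Fin 2 → ℝ), ∀ rM ∈ lat AM, ∀ α, u2 (x + rM) α = u2 x α)
    (v : 𝓐1 → 𝓐2 → (Fin 3 → ℝ) → ℝ)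
    (hvmeas : ∀ α1 α2, Measurable (v α1 α2))
    (hveven : ∀ α1 α2 z, v α1 α2 (-z) = v α1 α2 z)
    -- v_{(α₁,α₂)} ∈ L^∞_{2r}(ℝ² × [−L_u^z, L_u^z])
    (hv : ∀ α1 α2, ∃ C : ℝ, ∀ x ∈ slab
        ((⨆ a1 : 𝓐1, ⨆ a2 : 𝓐2, norm2 (τ1 a1 - τ2 a2)) +
          (⨆ x : Fin 2 → ℝ, ⨆ α : 𝓐1, |u1 x α 2|) +
          (⨆ x : Fin 2 → ℝ, ⨆ α : 𝓐2, |u2 x α 2|)),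
      jap3 x ^ (2 * r) * |v α1 α2 x| ≤ C) :
    ∀ᵐ γ ∂(volume.restrict ((cell A1) ×ˢ (cell A2))),
      -- j = 1
      Tendsto
        (fun N : ℕ => (|A1.det| * (2 * N + 1 : ℝ) ^ 2)⁻¹ *
          ∑ n ∈ box N, ∑ α1 : 𝓐1, (1 / 2 : ℝ) *
            ∑' p : (Fin 2 → ℤ) × 𝓐2,
              v α1 p.2
                ((emb (A1.mulVec (iv n) + γ.1) + emb (τ1 α1) +
                    u1 (A1.mulVec (iv n) + γ.1) α1) -
                  (emb (A2.mulVec (iv p.1) + γ.2) + emb (τ2 p.2) +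
                    u2 (A2.mulVec (iv p.1) + γ.2) p.2)))
        atTop
        (𝓝 ((2 * |AM.det| : ℝ)⁻¹ *
          ∑ α1 : 𝓐1, ∑ α2 : 𝓐2,
            ∫ ξ : Fin 2 → ℝ,
              v α1 α2
                (emb (A1.mulVec ξ + γ.1) + emb (τ1 α1) + u1 (A1.mulVec ξ + γ.1) α1 -
                  emb (A2.mulVec ξ + γ.2) - emb (τ2 α2) - u2 (A2.mulVec ξ + γ.2) α2))) ∧
      -- j = 2
      Tendsto
        (fun N : ℕ => (|A2.det| * (2 * N + 1 : ℝ) ^ 2)⁻¹ *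
          ∑ n ∈ box N, ∑ α2 : 𝓐2, (1 / 2 : ℝ) *
            ∑' p : (Fin 2 → ℤ) × 𝓐1,
              v p.2 α2
                ((emb (A2.mulVec (iv n) + γ.2) + emb (τ2 α2) +
                    u2 (A2.mulVec (iv n) + γ.2) α2) -
                  (emb (A1.mulVec (iv p.1) + γ.1) + emb (τ1 p.2) +
                    u1 (A1.mulVec (iv p.1) + γ.1) p.2)))
        atTop
        (𝓝 ((2 * |AM.det| : ℝ)⁻¹ *
          ∑ α1 : 𝓐1, ∑ α2 : 𝓐2,
            ∫ ξ : Fin 2 → ℝ,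
              v α1 α2
                (emb (A1.mulVec ξ + γ.1) + emb (τ1 α1) + u1 (A1.mulVec ξ + γ.1) α1 -
                  emb (A2.mulVec ξ + γ.2) - emb (τ2 α2) - u2 (A2.mulVec ξ + γ.2) α2))) := by
  have hsq : 0 < Real.sqrt q := Real.sqrt_pos.2 hq
  have hAd : A.det ≠ 0 := hA.ne_zero
  have hd1 : A1.det ≠ 0 := by
    rw [hA1, Matrix.det_smul, Matrix.det_mul, det_Rot]
    have : (Real.sqrt q)⁻¹ ≠ 0 := (inv_pos.2 hsq).ne'
    simp only [one_mul]
    exact mul_ne_zero (pow_ne_zero _ this) hAd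
  have hd2 : A2.det ≠ 0 := by
    rw [hA2, Matrix.det_smul, Matrix.det_mul, det_Rot]
    simp only [one_mul]
    exact mul_ne_zero (pow_ne_zero _ hsq.ne') hAd
  have hpi : (2 * π : ℝ) ≠ 0 := by positivity
  have hdM : AM.det ≠ 0 := by
    rw [hAM]
    simp only [recip, Matrix.det_smul, Matrix.det_transpose, Matrix.det_nonsing_inv]
    refine mul_ne_zero (pow_ne_zero _ hpi) ?_
    rw [Ring.inverse_eq_inv']
    exact inv_ne_zero hBMinv.ne_zero
  have hrel : AM⁻¹ = A1⁻¹ - A2⁻¹ := by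
    apply Matrix.inv_eq_left_inv
    have e : A1⁻¹ - A2⁻¹ = (2 * π)⁻¹ • BMᵀ := by
      rw [hBM, hB1, hB2]
      simp only [recip, Matrix.transpose_sub, Matrix.transpose_smul, Matrix.transpose_transpose]
      rw [← smul_sub, smul_smul, inv_mul_cancel₀ hpi, one_smul]
    rw [e, hAM]
    simp only [recip]
    rw [Matrix.smul_mul, Matrix.mul_smul, smul_smul, inv_mul_cancel₀ hpi, one_smul,
      ← Matrix.transpose_mul, Matrix.nonsing_inv_mul _ hBMinv, Matrix.transpose_one]
  have hnr := nonres_of_inc hd1 hd2 (by rw [← hB1, ← hB2]; exact hinc)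
  obtain ⟨C1, hC1⟩ := hu1
  obtain ⟨C2, hC2⟩ := hu2
  set L := (⨆ a1 : 𝓐1, ⨆ a2 : 𝓐2, norm2 (τ1 a1 - τ2 a2)) +
          (⨆ x : Fin 2 → ℝ, ⨆ α : 𝓐1, |u1 x α 2|) +
          (⨆ x : Fin 2 → ℝ, ⨆ α : 𝓐2, |u2 x α 2|) with hLdef
  have hL : ∀ α1 α2 x y, |u1 x α1 2| + |u2 y α2 2| ≤ L := by
    intro α1 α2 x y
    have a0 : 0 ≤ ⨆ a1 : 𝓐1, ⨆ a2 : 𝓐2, norm2 (τ1 a1 - τ2 a2) :=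
      Real.iSup_nonneg fun _ => Real.iSup_nonneg fun _ => Real.sqrt_nonneg _
    have a1 := le_double_iSup (f := fun x α => |u1 x α 2|) (C := C1)
      (fun x α => (abs_le_norm3 _ 2).trans (hC1 x α)) x α1
    have a2 := le_double_iSup (f := fun x α => |u2 x α 2|) (C := C2)
      (fun x α => (abs_le_norm3 _ 2).trans (hC2 x α)) y α2
    rw [hLdef]
    linarith
  -- the pair interaction as a function of the two undeformed positions
  set g : 𝓐1 → 𝓐2 → (Fin 2 → ℝ) → (Fin 2 → ℝ) → ℝ := fun α1 α2 x y =>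
    v α1 α2 ((emb x + emb (τ1 α1) + u1 x α1) - (emb y + emb (τ2 α2) + u2 y α2)) with hg
  have hgm : ∀ α1 α2, Measurable (Function.uncurry (g α1 α2)) := by
    intro α1 α2
    refine (hvmeas α1 α2).comp (Measurable.sub ?_ ?_)
    · exact ((measurable_emb.comp measurable_fst).add_const _).add
        ((hu1meas α1).comp measurable_fst)
    · exact ((measurable_emb.comp measurable_snd).add_const _).add
        ((hu2meas α2).comp measurable_snd)
  have hper : ∀ α1 α2 x y m,
      g α1 α2 (x + AM.mulVec (iv m)) (y + AM.mulVec (iv m)) = g α1 α2 x y := by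
    intro α1 α2 x y m
    simp only [hg]
    rw [hu1per x _ ⟨m, rfl⟩, hu2per y _ ⟨m, rfl⟩, emb_add', emb_add']
    congr 1
    abel
  have hdec : ∀ α1 α2, ∃ C : ℝ, ∀ x y, |g α1 α2 x y| ≤ C * (1 + ‖x - y‖) ^ (-(2 * r)) := by
    intro α1 α2
    obtain ⟨C, hC⟩ := hv α1 α2
    exact pair_decay hr (v α1 α2) hC (τ1 α1) (τ2 α2) (fun x => u1 x α1) (fun x => u2 x α2)
      (fun x => hC1 x α1) (fun x => hC2 x α2) (hL α1 α2)
  have hr2 : 2 < 2 * r := by linarith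
  have lim1 := layer_limit A1 A2 AM hd1 hd2 hdM hrel (fun k m h => (hnr k m h).2) g hgm hper
    hr2 hdec
  have hdetneg : (-AM).det = AM.det := by
    rw [Matrix.det_neg]; simp
  have lim2 := layer_limit A2 A1 (-AM) hd2 hd1 (by rw [hdetneg]; exact hdM)
    (by rw [← neg_sub, ← hrel]
        apply Matrix.inv_eq_left_inv
        rw [neg_mul_neg, Matrix.nonsing_inv_mul _ (isUnit_iff_ne_zero.2 hdM)])
    (fun k m h => (hnr m k h.symm).1)
    (fun α2 α1 y x => g α1 α2 x y)
    (fun α2 α1 => (hgm α1 α2).comp measurable_swap)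
    (fun α2 α1 y x m => by
      have e : (-AM).mulVec (iv m) = AM.mulVec (iv (-m)) := by
        rw [iv_neg, Matrix.neg_mulVec, Matrix.mulVec_neg]
      rw [e]
      exact hper α1 α2 x y (-m))
    hr2
    (fun α2 α1 => by
      obtain ⟨C, hC⟩ := hdec α1 α2
      exact ⟨C, fun y x => by rw [norm_sub_rev]; exact hC x y⟩)
  have hswap : MeasurePreserving
      (Prod.swap : (Fin 2 → ℝ) × (Fin 2 → ℝ) → _) volume volume :=
    Measure.measurePreserving_swap
  have lim2' := hswap.quasiMeasurePreserving.ae lim2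
  apply ae_restrict_of_ae
  filter_upwards [lim1, lim2'] with γ hγ1 hγ2
  have hinteg : ∀ α1 α2 (ξ : Fin 2 → ℝ), v α1 α2
      (emb (A1.mulVec ξ + γ.1) + emb (τ1 α1) + u1 (A1.mulVec ξ + γ.1) α1 -
        emb (A2.mulVec ξ + γ.2) - emb (τ2 α2) - u2 (A2.mulVec ξ + γ.2) α2) =
      g α1 α2 (A1.mulVec ξ + γ.1) (A2.mulVec ξ + γ.2) := by
    intro α1 α2 ξ
    simp only [hg]
    congr 1
    abel
  simp only [hinteg]
  refine ⟨hγ1, ?_⟩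
  have hflip : ∀ α1 α2 x y, v α1 α2
      ((emb y + emb (τ2 α2) + u2 y α2) - (emb x + emb (τ1 α1) + u1 x α1)) = g α1 α2 x y := by
    intro α1 α2 x y
    simp only [hg]
    rw [← hveven, neg_sub]
  simp only [hflip]
  rw [Finset.sum_comm]
  rw [hdetneg] at hγ2
  exact hγ2

end
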